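/- Let π be a prior density on the open simplex Θ_k bounded above by B, continuous almost everywhere with respect to Lebesgue measure. Define m_n*(r) = n^k · m_{T_n}(n(r)) where n(r) has coordinates ⌊n r_i + 1/2⌋ and m_{T_n} is the prior predictive probability function of the multinomial counts. Then m_n*(r) → π(r) as n → ∞ for Lebesgue-almost every r. -/

import Mathlib

open Finset MeasureTheory Filter Topology Nat

/-- The open simplex `Θ_k ⊆ ℝ^k` of the first `k` probabilities. -/
def openSimplex (k : ℕ) : Set (Fin k → ℝ) :=
  {θ | (∀ i, 0 < θ i) ∧ ∑ i, θ i < 1}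

/-- The prior predictive probability function of the multinomial counts
`t : Fin k → ℕ` (the count of the last category being `n - ∑ t`), for a prior
density `π` on `Θ_k`. -/
noncomputable def priorPred (k : ℕ) (π : (Fin k → ℝ) → ℝ) (n : ℕ)
    (t : Fin k → ℕ) : ℝ :=
  ((n ! : ℝ) / ((∏ i, (t i)!) * (n - ∑ i, t i)!)) *
    ∫ θ in openSimplex k,
      ((∏ i, θ i ^ t i) * (1 - ∑ i, θ i) ^ (n - ∑ i, t i)) * π θ

/-- The rounded count vector `n(r)` with coordinates `⌊n r_i + 1/2⌋` (as naturals). -/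
noncomputable def roundCount (k : ℕ) (n : ℕ) (r : Fin k → ℝ) : Fin k → ℕ :=
  fun i => (⌊(n : ℝ) * r i + 1 / 2⌋).toNat

/-- The continuized prior predictive density
`m_n*(r) = n^k · m_{T_n}(n(r))` (zero when `n(r)` is not a valid count vector). -/
noncomputable def mStar (k : ℕ) (π : (Fin k → ℝ) → ℝ) (n : ℕ) (r : Fin k → ℝ) : ℝ :=
  (n : ℝ) ^ k *
    (if (∀ i, (0 : ℤ) ≤ ⌊(n : ℝ) * r i + 1 / 2⌋) ∧ ∑ i, roundCount k n r i ≤ n then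
      priorPred k π n (roundCount k n r)
    else 0)

lemma beta1 (a s : ℕ) (c : ℝ) : ∫ x in (0:ℝ)..c, x ^ a * (c - x) ^ s
    = (a ! : ℝ) * s ! / (a + s + 1)! * c ^ (a + s + 1) := by
  induction a generalizing s with
  | zero =>
    have h := intervalIntegral.integral_comp_sub_left (a := 0) (b := c) (fun x : ℝ => x ^ s) c
    simp only [pow_zero, one_mul, h, sub_self, sub_zero, integral_pow]
    rw [zero_add, Nat.factorial_succ]
    have := Nat.factorial_pos s
    push_cast
    field_simp
    simp
  | succ a ih =>
    have h := intervalIntegral.integral_eq_sub_of_hasDerivAt (a := 0) (b := c)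
      (f := fun x : ℝ => x ^ (a+1) * (c - x) ^ (s+1))
      (f' := fun x : ℝ => (a+1) * (x ^ a * (c - x) ^ (s+1)) - (s+1) * (x ^ (a+1) * (c-x)^s))
      (fun x _ => by
        have h1 := (hasDerivAt_pow (a+1) x).mul (((hasDerivAt_id x).const_sub c).pow (s+1))
        refine h1.congr_deriv ?_
        simp
        ring)
      (Continuous.intervalIntegrable (by fun_prop) _ _)
    rw [intervalIntegral.integral_sub (Continuous.intervalIntegrable (by fun_prop) _ _)
      (Continuous.intervalIntegrable (by fun_prop) _ _), intervalIntegral.integral_const_mul,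
      intervalIntegral.integral_const_mul, ih] at h
    have e : a + (s + 1) + 1 = a + 1 + s + 1 := by ring
    rw [e, Nat.factorial_succ s] at h
    rw [Nat.factorial_succ a]
    simp at h
    have hs : (s + 1 : ℝ) ≠ 0 := by positivity
    apply mul_left_cancel₀ hs
    rw [sub_eq_zero] at h
    rw [← h]
    push_cast
    ring

lemma isOpen_openSimplex (k : ℕ) : IsOpen (openSimplex k) := by
  have : openSimplex k = (⋂ i, {θ | 0 < θ i}) ∩ {θ | ∑ i, θ i < 1} := by
    ext; simp [openSimplex]
  rw [this]
  refine (isOpen_iInter_of_finite fun i => isOpen_lt (by fun_prop) (by fun_prop)).inter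
    (isOpen_lt (by fun_prop) (by fun_prop))

lemma simplex_sub (k : ℕ) : openSimplex k ⊆ Set.Icc 0 1 := by
  intro θ h
  refine ⟨fun i => (h.1 i).le, fun i => ?_⟩
  exact (Finset.single_le_sum (f := θ) (fun j _ => (h.1 j).le) (Finset.mem_univ i)).trans h.2.le

lemma intOn {k : ℕ} {f : (Fin k → ℝ) → ℝ} (hf : Continuous f) :
    IntegrableOn f (openSimplex k) :=
  (hf.continuousOn.integrableOn_compact isCompact_Icc).mono_set (simplex_sub k)

lemma dirich (k : ℕ) (t : Fin k → ℕ) (s : ℕ) :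
    ∫ θ in openSimplex k, (∏ i, θ i ^ t i) * (1 - ∑ i, θ i) ^ s
      = (∏ i, ((t i)! : ℝ)) * s ! / (∑ i, t i + s + k)! := by
  induction k generalizing s with
  | zero =>
    have : openSimplex 0 = Set.univ := by ext; simp [openSimplex]
    have := Nat.factorial_ne_zero s
    simp [*, Measure.real, volume_pi]
  | succ k ih =>
    have hm := (isOpen_openSimplex (k+1)).measurableSet
    rw [← integral_indicator hm]
    set g : (Fin (k+1) → ℝ) → ℝ := fun θ => (∏ i, θ i ^ t i) * (1 - ∑ i, θ i) ^ s with hg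
    have hint : Integrable ((openSimplex (k+1)).indicator g) :=
      (integrable_indicator_iff hm).2 (intOn (by fun_prop))
    have mp := (volume_preserving_piFinSuccAbove (fun _ : Fin (k+1) => ℝ) 0).symm
    rw [← mp.integral_comp' , Measure.volume_eq_prod, integral_prod_symm]
    swap
    · exact (mp.integrable_comp_emb (MeasurableEquiv.measurableEmbedding _)).2 hint
    have key : ∀ y : Fin k → ℝ, (∫ x : ℝ, (openSimplex (k+1)).indicator g
        ((MeasurableEquiv.piFinSuccAbove (fun _ : Fin (k+1) => ℝ) 0).symm (x, y)))
        = (openSimplex k).indicator (fun y => ((t 0)! : ℝ) * s ! / (t 0 + s + 1)! *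
          ((∏ i, y i ^ t i.succ) * (1 - ∑ i, y i) ^ (t 0 + s + 1))) y := by
      intro y
      have hc : ∀ x : ℝ, (MeasurableEquiv.piFinSuccAbove (fun _ : Fin (k+1) => ℝ) 0).symm (x, y)
        = (Fin.cons x y : Fin (k+1) → ℝ) := by
          intro x
          simp [MeasurableEquiv.piFinSuccAbove, Fin.consEquiv]
      simp only [hc]
      by_cases hy : y ∈ openSimplex k
      · rw [Set.indicator_of_mem hy]
        have : ∀ x : ℝ, (openSimplex (k+1)).indicator g (Fin.cons x y : Fin (k+1) → ℝ)
          = (Set.Ioo 0 (1 - ∑ i, y i)).indicator (fun x => (∏ i, y i ^ t i.succ) *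
              (x ^ t 0 * ((1 - ∑ i, y i) - x) ^ s)) x := by
          intro x
          have hiff : (Fin.cons x y : Fin (k+1) → ℝ) ∈ openSimplex (k+1) ↔
              x ∈ Set.Ioo 0 (1 - ∑ i, y i) := by
            simp only [openSimplex, Set.mem_ofPred_eq, Fin.forall_fin_succ, Fin.sum_univ_succ,
              Fin.cons_zero, Fin.cons_succ, Set.mem_Ioo]
            constructor
            · rintro ⟨⟨h1, h2⟩, h3⟩
              exact ⟨h1, by linarith⟩
            · rintro ⟨h1, h3⟩
              exact ⟨⟨h1, hy.1⟩, by linarith⟩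
          by_cases hx : x ∈ Set.Ioo 0 (1 - ∑ i, y i)
          · rw [Set.indicator_of_mem hx, Set.indicator_of_mem (hiff.2 hx)]
            simp only [hg, Fin.prod_univ_succ, Fin.sum_univ_succ, Fin.cons_zero, Fin.cons_succ]
            rw [sub_add_eq_sub_sub_swap]
            ring
          · rw [Set.indicator_of_notMem hx, Set.indicator_of_notMem (fun h => hx (hiff.1 h))]
        simp only [this]
        rw [integral_indicator measurableSet_Ioo, ← integral_Ioc_eq_integral_Ioo,
          ← intervalIntegral.integral_of_le (by linarith [hy.2]),
          intervalIntegral.integral_const_mul, beta1]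
        ring
      · rw [Set.indicator_of_notMem hy]
        refine integral_eq_zero_of_ae (Eventually.of_forall fun x => ?_)
        refine Set.indicator_of_notMem (fun h => hy ?_) _
        simp only [openSimplex, Set.mem_ofPred_eq, Fin.forall_fin_succ, Fin.sum_univ_succ,
              Fin.cons_zero, Fin.cons_succ] at h
        exact ⟨h.1.2, by linarith [h.1.1, h.2]⟩
    simp only [key]
    rw [integral_indicator (isOpen_openSimplex k).measurableSet, integral_const_mul, ih,
      Fin.prod_univ_succ, Fin.sum_univ_succ]
    have e : ∑ i : Fin k, t i.succ + (t 0 + s + 1) + k = t 0 + ∑ i : Fin k, t i.succ + s + (k+1) := by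
      ring
    rw [e]
    have := Nat.factorial_ne_zero (t 0 + s + 1)
    have : ((t 0 + s + 1)! : ℝ) ≠ 0 := by exact_mod_cast this
    field_simp

lemma prod_single {k : ℕ} (t : Fin k → ℕ) (i : Fin k) (θ : Fin k → ℝ) :
    ∏ j, θ j ^ (t + Pi.single i 1 : Fin k → ℕ) j = (∏ j, θ j ^ t j) * θ i := by
  simp only [Pi.add_apply, pow_add, Finset.prod_mul_distrib, Pi.single_apply]
  congr 1
  simp [pow_ite]

lemma fact_single {k : ℕ} (t : Fin k → ℕ) (i : Fin k) :
    ∏ j, (((t + Pi.single i 1 : Fin k → ℕ) j)! : ℝ) = (∏ j, ((t j)! : ℝ)) * (t i + 1) := by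
  have : ∀ j, (((t + Pi.single i 1 : Fin k → ℕ) j)! : ℝ) = ((t j)! : ℝ) * (if i = j then (t j + 1 : ℝ) else 1) := by
    intro j
    by_cases h : i = j
    · subst h; simp [Nat.factorial_succ]; ring
    · simp [Pi.single_apply, h, Ne.symm h, eq_comm]
  simp only [this, Finset.prod_mul_distrib]
  simp

lemma sum_single {k : ℕ} (t : Fin k → ℕ) (i : Fin k) :
    ∑ j, (t + Pi.single i 1 : Fin k → ℕ) j = ∑ j, t j + 1 := by
  simp [Finset.sum_add_distrib]

lemma mom1 (k : ℕ) (t : Fin k → ℕ) (s : ℕ) (i : Fin k) :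
    ∫ θ in openSimplex k, ((∏ i, θ i ^ t i) * (1 - ∑ i, θ i) ^ s) * θ i
      = (∏ i, ((t i)! : ℝ)) * s ! / (∑ i, t i + s + k)! * ((t i + 1) / (∑ i, t i + s + k + 1 : ℕ)) := by
  have h := dirich k (t + Pi.single i 1) s
  simp only [prod_single, fact_single, sum_single] at h
  have e : ∑ j, t j + 1 + s + k = (∑ j, t j + s + k) + 1 := by ring
  rw [e, Nat.factorial_succ] at h
  rw [show (fun θ : Fin k → ℝ => ((∏ i, θ i ^ t i) * (1 - ∑ i, θ i) ^ s) * θ i)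
    = fun θ => (∏ i, θ i ^ t i) * θ i * (1 - ∑ i, θ i) ^ s from by ext; ring, h]
  push_cast
  have : ((∑ i, t i + s + k)! : ℝ) ≠ 0 := by exact_mod_cast Nat.factorial_ne_zero _
  field_simp

lemma mom2 (k : ℕ) (t : Fin k → ℕ) (s : ℕ) (i : Fin k) :
    ∫ θ in openSimplex k, ((∏ i, θ i ^ t i) * (1 - ∑ i, θ i) ^ s) * θ i ^ 2
      = (∏ i, ((t i)! : ℝ)) * s ! / (∑ i, t i + s + k)! *
        ((t i + 1) / (∑ i, t i + s + k + 1 : ℕ) * ((t i + 2) / (∑ i, t i + s + k + 2 : ℕ))) := by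
  have h := mom1 k (t + Pi.single i 1) s i
  simp only [prod_single, fact_single, sum_single] at h
  have e : ∑ j, t j + 1 + s + k = (∑ j, t j + s + k) + 1 := by ring
  rw [e, Nat.factorial_succ] at h
  rw [show (fun θ : Fin k → ℝ => ((∏ i, θ i ^ t i) * (1 - ∑ i, θ i) ^ s) * θ i ^ 2)
    = fun θ => (∏ i, θ i ^ t i) * θ i * (1 - ∑ i, θ i) ^ s * θ i from by ext; ring, h]
  simp only [Pi.add_apply, Pi.single_eq_same]
  push_cast
  have : ((∑ i, t i + s + k)! : ℝ) ≠ 0 := by exact_mod_cast Nat.factorial_ne_zero _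
  field_simp
  ring

lemma An (k : ℕ) : Tendsto (fun n : ℕ => (n:ℝ) ^ k * n ! / (n + k)!) atTop (𝓝 1) := by
  induction k with
  | zero =>
    refine tendsto_const_nhds.congr fun n => ?_
    have : (n ! : ℝ) ≠ 0 := by exact_mod_cast Nat.factorial_ne_zero _
    simp [this]
  | succ k ih =>
    have h := ih.mul (tendsto_natCast_div_add_atTop ((k:ℝ)+1))
    rw [one_mul] at h
    refine h.congr fun n => ?_
    rw [← add_assoc n, Nat.factorial_succ]
    have : ((n + k)! : ℝ) ≠ 0 := by exact_mod_cast Nat.factorial_ne_zero _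
    have : (n + (k + 1) : ℝ) ≠ 0 := by positivity
    push_cast
    rw [add_assoc (n:ℝ)]
    field_simp
    exact (pow_succ _ _).symm

/-- normalised kernel -/
noncomputable def kern (k n : ℕ) (t : Fin k → ℕ) (θ : Fin k → ℝ) : ℝ :=
  (n:ℝ)^k * ((n ! : ℝ) / ((∏ i, (t i)!) * (n - ∑ i, t i)!)) *
    ((∏ i, θ i ^ t i) * (1 - ∑ i, θ i) ^ (n - ∑ i, t i))

lemma kern_cont (k n : ℕ) (t : Fin k → ℕ) : Continuous (kern k n t) := by
  unfold kern; fun_prop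

lemma kern_nonneg (k n : ℕ) (t : Fin k → ℕ) (θ : Fin k → ℝ) (h : θ ∈ openSimplex k) :
    0 ≤ kern k n t θ := by
  unfold kern
  have h1 : 0 ≤ ∏ i, θ i ^ t i := Finset.prod_nonneg fun i _ => pow_nonneg (h.1 i).le _
  have h2 : 0 ≤ 1 - ∑ i, θ i := by linarith [h.2]
  positivity

lemma kern_pred (k n : ℕ) (t : Fin k → ℕ) (π : (Fin k → ℝ) → ℝ) :
    (n:ℝ)^k * priorPred k π n t = ∫ θ in openSimplex k, kern k n t θ * π θ := by
  unfold priorPred kern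
  simp only [mul_assoc, integral_const_mul]

lemma kern_aux (k n : ℕ) (t : Fin k → ℕ) (ht : ∑ i, t i ≤ n) (x : ℝ) :
    (n:ℝ)^k * ((n ! : ℝ) / ((∏ i, (t i)!) * (n - ∑ i, t i)!)) *
     ((∏ i, ((t i)! : ℝ)) * (n - ∑ i, t i)! / (∑ i, t i + (n - ∑ i, t i) + k)! * x)
     = (n:ℝ) ^ k * n ! / (n + k)! * x := by
  rw [Nat.add_sub_cancel' ht]
  have h1 : ((∏ i, (t i)! : ℕ) : ℝ) ≠ 0 := by
    exact_mod_cast Finset.prod_ne_zero_iff.2 fun i _ => Nat.factorial_ne_zero _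
  push_cast at h1 ⊢
  have h2 : ((n - ∑ i, t i)! : ℝ) ≠ 0 := by exact_mod_cast Nat.factorial_ne_zero _
  field_simp

lemma kern_int (k n : ℕ) (t : Fin k → ℕ) (ht : ∑ i, t i ≤ n) :
    ∫ θ in openSimplex k, kern k n t θ = (n:ℝ) ^ k * n ! / (n + k)! := by
  unfold kern
  rw [integral_const_mul, dirich]
  simpa using kern_aux k n t ht 1

lemma kern_int1 (k n : ℕ) (t : Fin k → ℕ) (ht : ∑ i, t i ≤ n) (i : Fin k) :
    ∫ θ in openSimplex k, kern k n t θ * θ i =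
      (n:ℝ) ^ k * n ! / (n + k)! * ((t i + 1) / (n + k + 1 : ℕ)) := by
  unfold kern
  rw [← kern_aux k n t ht]
  simp only [mul_assoc, integral_const_mul]
  have := mom1 k t (n - ∑ i, t i) i
  simp only [mul_assoc] at this
  rw [this, Nat.add_sub_cancel' ht]

lemma kern_int2 (k n : ℕ) (t : Fin k → ℕ) (ht : ∑ i, t i ≤ n) (i : Fin k) :
    ∫ θ in openSimplex k, kern k n t θ * θ i ^ 2 =
      (n:ℝ) ^ k * n ! / (n + k)! * ((t i + 1) / (n + k + 1 : ℕ) * ((t i + 2) / (n + k + 2 : ℕ))) := by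
  unfold kern
  rw [← kern_aux k n t ht]
  simp only [mul_assoc, integral_const_mul]
  have := mom2 k t (n - ∑ i, t i) i
  simp only [mul_assoc] at this
  rw [this, Nat.add_sub_cancel' ht]

lemma ptwise {k : ℕ} {B : ℝ} {π : (Fin k → ℝ) → ℝ} (hπ0 : ∀ θ, 0 ≤ π θ) (hπB : ∀ θ, π θ ≤ B)
    {r : Fin k → ℝ} (hc : ContinuousAt π r) {ε : ℝ} (hε : 0 < ε) :
    ∃ C, ∀ θ, |π θ - π r| ≤ ε + C * ∑ i, (θ i - r i) ^ 2 := by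
  obtain ⟨δ, hδ, h⟩ := Metric.continuousAt_iff.1 hc ε hε
  have hB : 0 ≤ B := (hπ0 r).trans (hπB r)
  refine ⟨B / δ ^ 2, fun θ => ?_⟩
  have hS : 0 ≤ ∑ i, (θ i - r i) ^ 2 := Finset.sum_nonneg fun i _ => sq_nonneg _
  by_cases hd : dist θ r < δ
  · have := h hd
    rw [Real.dist_eq] at this
    have : 0 ≤ B / δ ^ 2 * ∑ i, (θ i - r i) ^ 2 := by positivity
    linarith
  · have : ∃ i, δ ≤ dist (θ i) (r i) := by
      by_contra! hh
      exact hd ((dist_pi_lt_iff hδ).2 hh)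
    obtain ⟨i, hi⟩ := this
    rw [Real.dist_eq] at hi
    have h1 : δ ^ 2 ≤ (θ i - r i) ^ 2 := by
      rw [← sq_abs (θ i - r i)]; gcongr
    have h2 : (θ i - r i) ^ 2 ≤ ∑ i, (θ i - r i) ^ 2 :=
      Finset.single_le_sum (f := fun i => (θ i - r i)^2) (fun j _ => sq_nonneg _) (Finset.mem_univ i)
    have h3 : |π θ - π r| ≤ B := by
      rw [abs_le]; constructor <;> linarith [hπ0 θ, hπ0 r, hπB θ, hπB r]
    have h4 : B ≤ B / δ ^ 2 * ∑ i, (θ i - r i) ^ 2 := by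
      rw [div_mul_eq_mul_div, le_div_iff₀ (by positivity)]
      gcongr
      linarith
    linarith

lemma bound1 {k : ℕ} {B : ℝ} {π : (Fin k → ℝ) → ℝ} (hmeas : Measurable π)
    (hπ0 : ∀ θ, 0 ≤ π θ) (hπB : ∀ θ, π θ ≤ B) (r : Fin k → ℝ) (ε C : ℝ)
    (hC : ∀ θ, |π θ - π r| ≤ ε + C * ∑ i, (θ i - r i) ^ 2)
    (n : ℕ) (t : Fin k → ℕ) (ht : ∑ i, t i ≤ n) :
    |(n:ℝ)^k * priorPred k π n t - (n:ℝ) ^ k * n ! / (n + k)! * π r| ≤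
      (n:ℝ) ^ k * n ! / (n + k)! * (ε + C * ∑ i, ((t i + 1) / (n + k + 1 : ℕ) * ((t i + 2) / (n + k + 2 : ℕ))
        - 2 * r i * ((t i + 1) / (n + k + 1 : ℕ)) + r i ^ 2)) := by
  have hK := kern_cont k n t
  have hm := (isOpen_openSimplex k).measurableSet
  have i1 : IntegrableOn (fun θ => kern k n t θ * π θ) (openSimplex k) := by
    refine (intOn hK).mul_bdd (c := B) hmeas.aestronglyMeasurable (Eventually.of_forall fun θ => ?_)
    rw [Real.norm_eq_abs, abs_of_nonneg (hπ0 θ)]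
    exact hπB θ
  have i2 : IntegrableOn (fun θ => kern k n t θ * π r) (openSimplex k) := intOn (by fun_prop)
  rw [kern_pred, ← kern_int k n t ht, ← integral_mul_const, ← integral_sub i1 i2]
  have rhs : ∫ θ in openSimplex k, kern k n t θ * (ε + C * ∑ i, (θ i - r i) ^ 2)
     = (n:ℝ) ^ k * n ! / (n + k)! * (ε + C * ∑ i, ((t i + 1) / (n + k + 1 : ℕ) * ((t i + 2) / (n + k + 2 : ℕ))
        - 2 * r i * ((t i + 1) / (n + k + 1 : ℕ)) + r i ^ 2)) := by
    have e : ∀ θ : Fin k → ℝ, kern k n t θ * (ε + C * ∑ i, (θ i - r i) ^ 2)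
      = kern k n t θ * ε + C * ∑ i, (kern k n t θ * θ i ^ 2 - 2 * r i * (kern k n t θ * θ i)
         + r i ^ 2 * kern k n t θ) := by
      intro θ
      rw [mul_add, mul_left_comm, Finset.mul_sum]
      congr 2
      exact Finset.sum_congr rfl fun i _ => by ring
    simp only [e]
    rw [integral_add (intOn (by fun_prop)) (intOn (by fun_prop)), integral_mul_const,
      integral_const_mul, integral_finsetSum _ (fun i _ => intOn (by fun_prop)), kern_int k n t ht,
      mul_add, mul_left_comm _ C, Finset.mul_sum (a := (n:ℝ) ^ k * n ! / (n + k)!)]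
    congr 2
    refine Finset.sum_congr rfl fun i _ => ?_
    rw [integral_add (intOn (by fun_prop)) (intOn (by fun_prop)),
      integral_sub (intOn (by fun_prop)) (intOn (by fun_prop)), integral_const_mul,
      integral_const_mul, kern_int k n t ht, kern_int1 k n t ht, kern_int2 k n t ht]
    ring
  rw [kern_int k n t ht, ← rhs]
  refine (abs_integral_le_integral_abs).trans ?_
  refine setIntegral_mono_on (i1.sub i2).abs (intOn (by fun_prop)) hm fun θ hθ => ?_
  rw [← mul_sub, abs_mul, abs_of_nonneg (kern_nonneg k n t θ hθ)]
  exact mul_le_mul_of_nonneg_left (hC θ) (kern_nonneg k n t θ hθ)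

lemma ratio_lim {l : Filter ℕ} (hl : l ≤ atTop) {t : ℕ → ℕ} {r : ℝ}
    (h : ∀ᶠ n in l, |(t n : ℝ) - n * r| ≤ 1) (a b : ℕ) :
    Tendsto (fun n : ℕ => ((t n : ℝ) + a) / (n + b : ℕ)) l (𝓝 r) := by
  have hn : Tendsto (fun n : ℕ => ((n + b : ℕ) : ℝ)) l atTop :=
    (tendsto_natCast_atTop_atTop.comp (tendsto_add_atTop_nat b)).mono_left hl
  have h0 : Tendsto (fun n : ℕ => (1 + a + b * |r|) / ((n + b : ℕ) : ℝ)) l (𝓝 0) :=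
    hn.const_div_atTop _
  rw [tendsto_iff_dist_tendsto_zero]
  refine squeeze_zero' (Eventually.of_forall fun _ => dist_nonneg) ?_ h0
  filter_upwards [h, hn.eventually_gt_atTop 0] with n h1 h2
  rw [Real.dist_eq, div_sub' h2.ne', abs_div, abs_of_pos h2]
  gcongr
  push_cast
  have : (t n : ℝ) + a - (n + b) * r = (t n - n * r) + a + - (b * r) := by ring
  rw [this]
  refine (abs_add_le _ _).trans ?_
  rw [abs_neg, abs_mul, Nat.abs_cast]
  gcongr
  refine (abs_add_le _ _).trans ?_
  rw [Nat.abs_cast]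
  gcongr

lemma main_lim {k : ℕ} {B : ℝ} {π : (Fin k → ℝ) → ℝ} (hmeas : Measurable π)
    (hπ0 : ∀ θ, 0 ≤ π θ) (hπB : ∀ θ, π θ ≤ B) {r : Fin k → ℝ} (hc : ContinuousAt π r)
    {l : Filter ℕ} (hl : l ≤ atTop) {t : ℕ → Fin k → ℕ}
    (h : ∀ᶠ n in l, ∀ i, |(t n i : ℝ) - n * r i| ≤ 1) (hs : ∀ᶠ n in l, ∑ i, t n i ≤ n) :
    Tendsto (fun n : ℕ => (n:ℝ)^k * priorPred k π n (t n)) l (𝓝 (π r)) := by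
  have hA := (An k).mono_left hl
  have hd : Tendsto (fun n : ℕ => (n:ℝ)^k * priorPred k π n (t n)
      - (n:ℝ) ^ k * n ! / (n + k)! * π r) l (𝓝 0) := by
    rw [Metric.tendsto_nhds]
    intro ε hε
    obtain ⟨C, hC⟩ := ptwise hπ0 hπB hc (half_pos hε)
    have hlim : Tendsto (fun n : ℕ => (n:ℝ) ^ k * n ! / (n + k)! * (ε/2 + C * ∑ i, ((t n i + 1) / (n + k + 1 : ℕ) * ((t n i + 2) / (n + k + 2 : ℕ))
        - 2 * r i * ((t n i + 1) / (n + k + 1 : ℕ)) + r i ^ 2))) l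
        (𝓝 (1 * (ε/2 + C * ∑ i, (r i * r i - 2 * r i * r i + r i ^ 2)))) := by
      refine hA.mul (tendsto_const_nhds.add (tendsto_const_nhds.mul
        (tendsto_finsetSum _ fun i _ => ?_)))
      have hi : ∀ᶠ n in l, |(t n i : ℝ) - n * r i| ≤ 1 := h.mono fun n hn => hn i
      have l1 := ratio_lim hl hi 1 (k+1)
      have l2 := ratio_lim hl hi 2 (k+2)
      simp only [← add_assoc, Nat.cast_one, Nat.cast_ofNat] at l1 l2
      exact ((l1.mul l2).sub (l1.const_mul _)).add_const _
    have e : (1 * (ε/2 + C * ∑ i, (r i * r i - 2 * r i * r i + r i ^ 2))) = ε/2 := by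
      have : ∀ i, r i * r i - 2 * r i * r i + r i ^ 2 = 0 := fun i => by ring
      simp [this]
    rw [e] at hlim
    filter_upwards [hlim.eventually_lt_const (half_lt_self hε), hs] with n h1 h2
    rw [Real.dist_eq, sub_zero]
    exact (bound1 hmeas hπ0 hπB r _ C hC n (t n) h2).trans_lt h1
  have := hd.add (hA.mul_const (π r))
  simpa using this

/-- If the prior density `π` on `Θ_k` is bounded above and continuous almost everywhere,
then `m_n* → π` almost everywhere with respect to Lebesgue measure. -/
theorem stmt_16 (k : ℕ) (B : ℝ) (π : (Fin k → ℝ) → ℝ)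
    (hmeas : Measurable π) (hπ0 : ∀ θ, 0 ≤ π θ) (hπB : ∀ θ, π θ ≤ B)
    (hsupp : ∀ θ, θ ∉ openSimplex k → π θ = 0)
    (hint : ∫ θ in openSimplex k, π θ = 1)
    (hcont : ∀ᵐ θ ∂(volume : Measure (Fin k → ℝ)), ContinuousAt π θ) :
    ∀ᵐ r ∂(volume : Measure (Fin k → ℝ)),
      Tendsto (fun n : ℕ => mStar k π n r) atTop (𝓝 (π r)) := by
  filter_upwards [hcont] with r hr
  have hfl : ∀ n : ℕ, ∀ i, (0 : ℤ) ≤ ⌊(n : ℝ) * r i + 1 / 2⌋ →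
      |(roundCount k n r i : ℝ) - n * r i| ≤ 1 := by
    intro n i h
    have e : (roundCount k n r i : ℝ) = (⌊(n : ℝ) * r i + 1 / 2⌋ : ℝ) := by
      have : ((roundCount k n r i : ℕ) : ℤ) = ⌊(n : ℝ) * r i + 1 / 2⌋ := Int.toNat_of_nonneg h
      exact_mod_cast this
    rw [e, abs_le]
    have h1 := Int.floor_le ((n : ℝ) * r i + 1 / 2)
    have h2 := Int.lt_floor_add_one ((n : ℝ) * r i + 1 / 2)
    constructor <;> linarith
  have hm : (fun n : ℕ => mStar k π n r) = fun n : ℕ =>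
      if (∀ i, (0 : ℤ) ≤ ⌊(n : ℝ) * r i + 1 / 2⌋) ∧ ∑ i, roundCount k n r i ≤ n then
        (n : ℝ) ^ k * priorPred k π n (roundCount k n r) else 0 := by
    funext n
    unfold mStar
    rw [mul_ite, mul_zero]
  rw [hm]
  refine Tendsto.if ?_ ?_
  · refine main_lim hmeas hπ0 hπB hr inf_le_left ?_ ?_
    · filter_upwards [mem_inf_of_right (mem_principal_self _)] with n hn i
      exact hfl n i (hn.1 i)
    · filter_upwards [mem_inf_of_right (mem_principal_self _)] with n hn
      exact hn.2
  · by_cases hrs : r ∈ openSimplex k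
    · refine tendsto_const_nhds.congr' ?_
      have ev : ∀ᶠ n : ℕ in atTop, (k : ℝ) ≤ n * (1 - ∑ i, r i) :=
        (tendsto_natCast_atTop_atTop.atTop_mul_const (by linarith [hrs.2])).eventually_ge_atTop _
      filter_upwards [mem_inf_of_left ev, mem_inf_of_right (mem_principal_self _)] with n h1 h2
      refine absurd ?_ h2
      have h0 : ∀ i, (0 : ℤ) ≤ ⌊(n : ℝ) * r i + 1 / 2⌋ := fun i =>
        Int.floor_nonneg.2 (by have := (hrs.1 i).le; positivity)
      refine ⟨h0, ?_⟩
      have : (∑ i, (roundCount k n r i : ℝ)) ≤ ∑ i, (n * r i + 1) :=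
        Finset.sum_le_sum fun i _ => by linarith [(abs_le.1 (hfl n i (h0 i))).2]
      rw [Finset.sum_add_distrib, ← Finset.mul_sum] at this
      simp at this
      have : ((∑ i, roundCount k n r i : ℕ) : ℝ) ≤ n := by
        push_cast; linarith
      exact_mod_cast this
    · rw [hsupp r hrs]
      exact tendsto_const_nhds
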